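/- The function μ is locally Lipschitz on (0,∞): for every 0 < a < b there exists a constant K > 0 such that |μ(s₁) − μ(s₂)| ≤ K |s₁ − s₂| for all s₁, s₂ ∈ [a,b]. -/

import Mathlib

open Set MeasureTheory intervalIntegral Filter Topology

noncomputable section

namespace RT

/-- The piecewise integral `∫_{-m}^0 + ∫_0^ℓ`. -/
def pwInt (m l : ℝ) (f : ℝ → ℝ) : ℝ :=
  (∫ x in (-m)..(0:ℝ), f x) + ∫ x in (0:ℝ)..l, f x

/-- `f` restricted to `[-m,0)` extends continuously to `[-m,0]`, and `f` restricted to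
`(0,ℓ]` extends continuously to `[0,ℓ]`. -/
def PiecewiseCont (m l : ℝ) (f : ℝ → ℝ) : Prop :=
  (∃ F : ℝ → ℝ, ContinuousOn F (Icc (-m) 0) ∧ EqOn f F (Ico (-m) 0)) ∧
  (∃ F : ℝ → ℝ, ContinuousOn F (Icc 0 l) ∧ EqOn f F (Ioc 0 l))

/-- A profile function: the restriction to `[-m,0)` extends continuously to `[-m,0]`, and
the function is continuous on `[0,ℓ]` (hence right-continuous at `0`). -/
def Profile (m l : ℝ) (f : ℝ → ℝ) : Prop :=
  (∃ F : ℝ → ℝ, ContinuousOn F (Icc (-m) 0) ∧ EqOn f F (Ico (-m) 0)) ∧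
  ContinuousOn f (Icc 0 l)

/-- The four steady-state profiles `ρ0, p, ε0, δ0` with their positivity assumptions. -/
def ProfilesHyp (m l : ℝ) (ρ0 p ε0 δ0 : ℝ → ℝ) : Prop :=
  Profile m l ρ0 ∧ Profile m l p ∧ Profile m l ε0 ∧ Profile m l δ0 ∧
  (∀ x ∈ Icc (-m) l, 0 < ρ0 x) ∧ (∀ x ∈ Icc (-m) l, 0 < p x) ∧
  (∀ x ∈ Icc (-m) l, 0 < ε0 x) ∧ (∀ x ∈ Icc (-m) l, 0 ≤ δ0 x)

/-- `f` is continuous on `[-m,ℓ]` and continuously differentiable on `[-m,0]` and on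
`[0,ℓ]`, with piecewise derivative `fd`. -/
def PiecewiseC1 (m l : ℝ) (f fd : ℝ → ℝ) : Prop :=
  ContinuousOn f (Icc (-m) l) ∧
  (∀ x ∈ Ico (-m) 0, HasDerivWithinAt f (fd x) (Icc (-m) 0) x) ∧
  (∀ x ∈ Ioc 0 l, HasDerivWithinAt f (fd x) (Icc 0 l) x) ∧
  PiecewiseCont m l fd

/-- An admissible pair `(φ,ψ)` with piecewise derivatives `(φd,ψd)`. -/
def Admissible (m l : ℝ) (φ ψ φd ψd : ℝ → ℝ) : Prop :=
  PiecewiseC1 m l φ φd ∧ PiecewiseC1 m l ψ ψd ∧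
  φ (-m) = 0 ∧ φ l = 0 ∧ ψ (-m) = 0 ∧ ψ l = 0

/-- The energy `E(φ,ψ;s)`. -/
def energyE (m l g σ k : ℝ) (ρ0 p ε0 δ0 : ℝ → ℝ) (φ ψ φd ψd : ℝ → ℝ) (s : ℝ) : ℝ :=
  σ * k ^ 2 / 2 * (ψ 0) ^ 2
  + (1 / 2) * pwInt m l (fun x =>
      (s * δ0 x + p x * ρ0 x) * (ψd x + k * φ x) ^ 2 - 2 * g * ρ0 x * k * φ x * ψ x)
  + (s / 2) * pwInt m l (fun x =>
      ε0 x * ((φd x - k * ψ x) ^ 2 + (ψd x - k * φ x) ^ 2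
        + (1 / 3) * (ψd x + k * φ x) ^ 2))

/-- The normalization functional `J(φ,ψ)`. -/
def energyJ (m l : ℝ) (ρ0 : ℝ → ℝ) (φ ψ : ℝ → ℝ) : ℝ :=
  (1 / 2) * pwInt m l (fun x => ρ0 x * ((φ x) ^ 2 + (ψ x) ^ 2))

/-- The viscous part `E1(φ,ψ)` of the energy. -/
def energyE1 (m l k : ℝ) (ε0 δ0 : ℝ → ℝ) (φ ψ φd ψd : ℝ → ℝ) : ℝ :=
  (1 / 2) * pwInt m l (fun x => (δ0 x + ε0 x / 3) * (ψd x + k * φ x) ^ 2)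
  + (1 / 2) * pwInt m l (fun x =>
      ε0 x * ((φd x - k * ψ x) ^ 2 + (ψd x - k * φ x) ^ 2))

/-- `μ(s)`: the infimum of `E(·,·;s)` over admissible pairs with `J = 1`. -/
def muInf (m l g σ k : ℝ) (ρ0 p ε0 δ0 : ℝ → ℝ) (s : ℝ) : ℝ :=
  sInf { e : ℝ | ∃ φ ψ φd ψd : ℝ → ℝ, Admissible m l φ ψ φd ψd ∧
    energyJ m l ρ0 φ ψ = 1 ∧ e = energyE m l g σ k ρ0 p ε0 δ0 φ ψ φd ψd s }

/-- The hydrostatic steady-state relation `ρ0' = -g ρ0 / p` on each piece. -/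
def Hydrostatic (m l g : ℝ) (ρ0 p : ℝ → ℝ) : Prop :=
  (∀ x ∈ Ico (-m) 0, HasDerivWithinAt ρ0 (-g * ρ0 x / p x) (Ico (-m) 0) x) ∧
  (∀ x ∈ Ioc 0 l, HasDerivWithinAt ρ0 (-g * ρ0 x / p x) (Ioc 0 l) x)

end RT

namespace RT

lemma PiecewiseCont.map2 {m l : ℝ} {f h : ℝ → ℝ} (op : ℝ → ℝ → ℝ)
    (hop : Continuous (fun q : ℝ × ℝ => op q.1 q.2))
    (hf : PiecewiseCont m l f) (hh : PiecewiseCont m l h) :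
    PiecewiseCont m l (fun x => op (f x) (h x)) := by
  obtain ⟨⟨F, hF, eF⟩, ⟨G, hG, eG⟩⟩ := hf
  obtain ⟨⟨F2, hF2, eF2⟩, ⟨G2, hG2, eG2⟩⟩ := hh
  refine ⟨⟨fun x => op (F x) (F2 x), hop.comp_continuousOn (hF.prodMk hF2), ?_⟩,
    ⟨fun x => op (G x) (G2 x), hop.comp_continuousOn (hG.prodMk hG2), ?_⟩⟩
  · intro x hx
    simp only [eF hx, eF2 hx]
  · intro x hx
    simp only [eG hx, eG2 hx]

lemma PiecewiseCont.add {m l : ℝ} {f h : ℝ → ℝ}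
    (hf : PiecewiseCont m l f) (hh : PiecewiseCont m l h) :
    PiecewiseCont m l (fun x => f x + h x) :=
  hf.map2 (fun a b => a + b) (by fun_prop) hh

lemma PiecewiseCont.sub {m l : ℝ} {f h : ℝ → ℝ}
    (hf : PiecewiseCont m l f) (hh : PiecewiseCont m l h) :
    PiecewiseCont m l (fun x => f x - h x) :=
  hf.map2 (fun a b => a - b) (by fun_prop) hh

lemma PiecewiseCont.mul {m l : ℝ} {f h : ℝ → ℝ}
    (hf : PiecewiseCont m l f) (hh : PiecewiseCont m l h) :
    PiecewiseCont m l (fun x => f x * h x) :=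
  hf.map2 (fun a b => a * b) (by fun_prop) hh

lemma PiecewiseCont.sq {m l : ℝ} {f : ℝ → ℝ}
    (hf : PiecewiseCont m l f) :
    PiecewiseCont m l (fun x => f x ^ 2) :=
  hf.map2 (fun a _ => a ^ 2) (by fun_prop) hf

lemma PiecewiseCont.const (m l c : ℝ) : PiecewiseCont m l (fun _ => c) :=
  ⟨⟨fun _ => c, continuousOn_const, fun _ _ => rfl⟩,
    ⟨fun _ => c, continuousOn_const, fun _ _ => rfl⟩⟩

lemma Profile.pc {m l : ℝ} {f : ℝ → ℝ} (hf : Profile m l f) : PiecewiseCont m l f :=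
  ⟨hf.1, ⟨f, hf.2, fun _ _ => rfl⟩⟩

lemma PiecewiseC1.pc {m l : ℝ} {f fd : ℝ → ℝ} (hm : 0 < m) (hl : 0 < l)
    (hf : PiecewiseC1 m l f fd) : PiecewiseCont m l f :=
  ⟨⟨f, hf.1.mono (Icc_subset_Icc_right hl.le), fun _ _ => rfl⟩,
    ⟨f, hf.1.mono (Icc_subset_Icc_left (by linarith)), fun _ _ => rfl⟩⟩

lemma PiecewiseCont.int {m l : ℝ} {f : ℝ → ℝ} (hm : 0 < m) (hl : 0 < l)
    (hf : PiecewiseCont m l f) :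
    IntervalIntegrable f volume (-m) 0 ∧ IntervalIntegrable f volume 0 l := by
  obtain ⟨⟨F, hF, eF⟩, ⟨G, hG, eG⟩⟩ := hf
  constructor
  · have h1 : IntegrableOn F (Ico (-m) 0) :=
      (hF.integrableOn_Icc).mono_set Ico_subset_Icc_self
    rw [intervalIntegrable_iff_integrableOn_Ico_of_le (by linarith)]
    exact h1.congr_fun eF.symm measurableSet_Ico
  · have h1 : IntegrableOn G (Ioc 0 l) :=
      (hG.integrableOn_Icc).mono_set Ioc_subset_Icc_self
    rw [intervalIntegrable_iff_integrableOn_Ioc_of_le hl.le]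
    exact h1.congr_fun eG.symm measurableSet_Ioc

lemma pwInt_add {m l : ℝ} {f h : ℝ → ℝ} (hm : 0 < m) (hl : 0 < l)
    (hf : PiecewiseCont m l f) (hh : PiecewiseCont m l h) :
    pwInt m l (fun x => f x + h x) = pwInt m l f + pwInt m l h := by
  unfold pwInt
  rw [intervalIntegral.integral_add (hf.int hm hl).1 (hh.int hm hl).1,
    intervalIntegral.integral_add (hf.int hm hl).2 (hh.int hm hl).2]
  ring

lemma pwInt_const_mul (m l c : ℝ) (f : ℝ → ℝ) :
    pwInt m l (fun x => c * f x) = c * pwInt m l f := by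
  unfold pwInt
  rw [intervalIntegral.integral_const_mul, intervalIntegral.integral_const_mul]
  ring

lemma pwInt_nonneg {m l : ℝ} {f : ℝ → ℝ} (hm : 0 < m) (hl : 0 < l)
    (hf : ∀ x ∈ Icc (-m) l, 0 ≤ f x) : 0 ≤ pwInt m l f := by
  unfold pwInt
  refine add_nonneg (intervalIntegral.integral_nonneg (by linarith) fun x hx => hf x ?_)
    (intervalIntegral.integral_nonneg hl.le fun x hx => hf x ?_)
  · exact ⟨hx.1, by linarith [hx.2]⟩
  · exact ⟨by linarith [hx.1], hx.2⟩

/-- On admissible pairs with `J = 1`, the energy is affine in `s`. -/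
lemma energy_affine (m l g σ k : ℝ) (ρ0 p ε0 δ0 : ℝ → ℝ)
    (hm : 0 < m) (hl : 0 < l) (hg : 0 < g) (hσ : 0 ≤ σ) (hk : 0 < k)
    (hprof : ProfilesHyp m l ρ0 p ε0 δ0) (φ ψ φd ψd : ℝ → ℝ)
    (hadm : Admissible m l φ ψ φd ψd) (hJ : energyJ m l ρ0 φ ψ = 1) :
    ∃ A B : ℝ, -(g * k) ≤ A ∧ 0 ≤ B ∧
      ∀ s, energyE m l g σ k ρ0 p ε0 δ0 φ ψ φd ψd s = A + s * B := by
  obtain ⟨hρ, hp, hε, hδ, pρ, pp, pε, pδ⟩ := hprof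
  obtain ⟨hφ, hψ, -⟩ := hadm
  have cρ := hρ.pc
  have cp := hp.pc
  have cδ := hδ.pc
  have cφ := hφ.pc hm hl
  have cψ := hψ.pc hm hl
  have cψd := hψ.2.2.2
  have cq : PiecewiseCont m l (fun x => (ψd x + k * φ x) ^ 2) :=
    (cψd.add ((PiecewiseCont.const m l k).mul cφ)).sq
  have cA : PiecewiseCont m l (fun x => p x * ρ0 x * (ψd x + k * φ x) ^ 2
      - 2 * g * ρ0 x * k * φ x * ψ x) := by
    refine ((cp.mul cρ).mul cq).sub (PiecewiseCont.mul (PiecewiseCont.mul (PiecewiseCont.mul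
      (PiecewiseCont.mul (PiecewiseCont.const m l (2 * g)) cρ) (PiecewiseCont.const m l k)) cφ) cψ)
  have cB : PiecewiseCont m l (fun x => δ0 x * (ψd x + k * φ x) ^ 2) := cδ.mul cq
  have cJ : PiecewiseCont m l (fun x => ρ0 x * ((φ x) ^ 2 + (ψ x) ^ 2)) :=
    cρ.mul (cφ.sq.add cψ.sq)
  refine ⟨σ * k ^ 2 / 2 * (ψ 0) ^ 2 + (1 / 2) * pwInt m l (fun x =>
      p x * ρ0 x * (ψd x + k * φ x) ^ 2 - 2 * g * ρ0 x * k * φ x * ψ x),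
    (1 / 2) * pwInt m l (fun x => δ0 x * (ψd x + k * φ x) ^ 2) + (1 / 2) * pwInt m l (fun x =>
      ε0 x * ((φd x - k * ψ x) ^ 2 + (ψd x - k * φ x) ^ 2
        + (1 / 3) * (ψd x + k * φ x) ^ 2)), ?_, ?_, ?_⟩
  · have h0 : 0 ≤ pwInt m l (fun x => (p x * ρ0 x * (ψd x + k * φ x) ^ 2
        - 2 * g * ρ0 x * k * φ x * ψ x)
        + (g * k) * (ρ0 x * ((φ x) ^ 2 + (ψ x) ^ 2))) := by
      refine pwInt_nonneg hm hl fun x hx => ?_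
      have h1 := (pρ x hx).le
      have h2 := (pp x hx).le
      have h3 : 0 ≤ p x * ρ0 x * (ψd x + k * φ x) ^ 2 := by positivity
      have h4 : 0 ≤ g * k * ρ0 x * (φ x - ψ x) ^ 2 := by positivity
      nlinarith
    rw [pwInt_add hm hl cA ((PiecewiseCont.const m l (g * k)).mul cJ), pwInt_const_mul] at h0
    unfold energyJ at hJ
    have h5 : pwInt m l (fun x => ρ0 x * ((φ x) ^ 2 + (ψ x) ^ 2)) = 2 := by linarith
    rw [h5] at h0
    have h6 : 0 ≤ σ * k ^ 2 / 2 * (ψ 0) ^ 2 := by positivity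
    linarith
  · have h1 : 0 ≤ pwInt m l (fun x => δ0 x * (ψd x + k * φ x) ^ 2) :=
      pwInt_nonneg hm hl fun x hx => mul_nonneg (pδ x hx) (sq_nonneg _)
    have h2 : 0 ≤ pwInt m l (fun x =>
      ε0 x * ((φd x - k * ψ x) ^ 2 + (ψd x - k * φ x) ^ 2
        + (1 / 3) * (ψd x + k * φ x) ^ 2)) :=
      pwInt_nonneg hm hl fun x hx => mul_nonneg (pε x hx).le (by positivity)
    linarith
  · intro s
    have h1 : pwInt m l (fun x =>
        (s * δ0 x + p x * ρ0 x) * (ψd x + k * φ x) ^ 2 - 2 * g * ρ0 x * k * φ x * ψ x)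
        = pwInt m l (fun x => p x * ρ0 x * (ψd x + k * φ x) ^ 2 - 2 * g * ρ0 x * k * φ x * ψ x)
          + s * pwInt m l (fun x => δ0 x * (ψd x + k * φ x) ^ 2) := by
      rw [← pwInt_const_mul, ← pwInt_add hm hl cA ((PiecewiseCont.const m l s).mul cB)]
      congr 1
      funext x
      ring
    unfold energyE
    rw [h1]
    ring

/-- Infimum of affine functions with nonnegative slopes and intercepts bounded below. -/
lemma sInf_affine_lipschitz (S : Set (ℝ × ℝ)) (c : ℝ) (hc : 0 ≤ c)
    (hS : ∀ q ∈ S, -c ≤ q.1 ∧ 0 ≤ q.2) (a b : ℝ) (ha : 0 < a) :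
    ∃ K : ℝ, 0 < K ∧ ∀ s₁ ∈ Icc a b, ∀ s₂ ∈ Icc a b,
      |sInf ((fun q : ℝ × ℝ => q.1 + s₁ * q.2) '' S)
        - sInf ((fun q : ℝ × ℝ => q.1 + s₂ * q.2) '' S)| ≤ K * |s₁ - s₂| := by
  rcases S.eq_empty_or_nonempty with rfl | hne
  · exact ⟨1, one_pos, fun s₁ _ s₂ _ => by simp⟩
  set M : ℝ → ℝ := fun s => sInf ((fun q : ℝ × ℝ => q.1 + s * q.2) '' S) with hM
  have hle : ∀ s, 0 ≤ s → ∀ q ∈ S, M s ≤ q.1 + s * q.2 := by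
    intro s hs q hq
    refine csInf_le ⟨-c, ?_⟩ ⟨q, hq, rfl⟩
    rintro _ ⟨r, hr, rfl⟩
    have := mul_nonneg hs (hS r hr).2
    have := (hS r hr).1
    dsimp only
    linarith
  have hge : ∀ s, ∀ y, (∀ q ∈ S, y ≤ q.1 + s * q.2) → y ≤ M s := by
    intro s y h
    refine le_csInf (hne.image _) ?_
    rintro _ ⟨r, hr, rfl⟩
    exact h r hr
  have hmono : ∀ s t, 0 ≤ s → s ≤ t → M s ≤ M t := by
    intro s t hs hst
    refine hge t _ fun q hq => (hle s hs q hq).trans ?_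
    have := mul_le_mul_of_nonneg_right hst (hS q hq).2
    linarith
  set K : ℝ := (|M b| + c + 1) / a with hK
  have hKpos : 0 < K := by positivity
  have key : ∀ s t, a ≤ s → s ≤ t → t ≤ b → M t - M s ≤ K * (t - s) := by
    intro s t has hst htb
    refine le_of_forall_pos_le_add fun η hη => ?_
    have hη2 : 0 < min η 1 := lt_min hη one_pos
    obtain ⟨_, ⟨q, hq, rfl⟩, hlt⟩ := exists_lt_of_csInf_lt
      (hne.image (fun q : ℝ × ℝ => q.1 + s * q.2)) (show M s < M s + min η 1 by linarith)
    dsimp only at hlt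
    have hB := (hS q hq).2
    have hA := (hS q hq).1
    have h1 := hmono s b (by linarith) (by linarith)
    have h2 := le_abs_self (M b)
    have h3 : a * q.2 ≤ s * q.2 := mul_le_mul_of_nonneg_right has hB
    have h4 : q.2 ≤ K := by
      rw [hK, le_div_iff₀ ha]
      linarith [min_le_right η 1]
    have h5 := hle t (by linarith) q hq
    have h6 := mul_le_mul_of_nonneg_right h4 (sub_nonneg.2 hst)
    nlinarith [min_le_left η 1]
  refine ⟨K, hKpos, fun s₁ h₁ s₂ h₂ => ?_⟩
  change |M s₁ - M s₂| ≤ _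
  rcases le_total s₁ s₂ with h | h
  · rw [abs_sub_comm, abs_sub_comm s₁, abs_of_nonneg (sub_nonneg.2 h),
      abs_of_nonneg (sub_nonneg.2 (hmono _ _ (ha.le.trans h₁.1) h))]
    exact key _ _ h₁.1 h h₂.2
  · rw [abs_of_nonneg (sub_nonneg.2 h),
      abs_of_nonneg (sub_nonneg.2 (hmono _ _ (ha.le.trans h₂.1) h))]
    exact key _ _ h₂.1 h h₁.2

/-- The function `μ` is locally Lipschitz on `(0,∞)`. -/
theorem muInf_locally_lipschitz (m l g σ k : ℝ) (ρ0 p ε0 δ0 : ℝ → ℝ)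
    (hm : 0 < m) (hl : 0 < l) (hg : 0 < g) (hσ : 0 ≤ σ) (hk : 0 < k)
    (hprof : ProfilesHyp m l ρ0 p ε0 δ0) :
    ∀ a b : ℝ, 0 < a → a < b →
      ∃ K : ℝ, 0 < K ∧ ∀ s₁ ∈ Icc a b, ∀ s₂ ∈ Icc a b,
        |muInf m l g σ k ρ0 p ε0 δ0 s₁ - muInf m l g σ k ρ0 p ε0 δ0 s₂|
          ≤ K * |s₁ - s₂| := by
  intro a b ha _
  set S : Set (ℝ × ℝ) := {q | ∃ φ ψ φd ψd : ℝ → ℝ, Admissible m l φ ψ φd ψd ∧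
    energyJ m l ρ0 φ ψ = 1 ∧ (-(g * k) ≤ q.1 ∧ 0 ≤ q.2) ∧
      ∀ s, energyE m l g σ k ρ0 p ε0 δ0 φ ψ φd ψd s = q.1 + s * q.2} with hS
  have hmu : ∀ s, muInf m l g σ k ρ0 p ε0 δ0 s
      = sInf ((fun q : ℝ × ℝ => q.1 + s * q.2) '' S) := by
    intro s
    unfold muInf
    congr 1
    ext e
    constructor
    · rintro ⟨φ, ψ, φd, ψd, h1, h2, rfl⟩
      obtain ⟨A, B, hA, hB, hE⟩ :=
        energy_affine m l g σ k ρ0 p ε0 δ0 hm hl hg hσ hk hprof φ ψ φd ψd h1 h2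
      exact ⟨(A, B), ⟨φ, ψ, φd, ψd, h1, h2, ⟨hA, hB⟩, hE⟩, (hE s).symm⟩
    · rintro ⟨q, ⟨φ, ψ, φd, ψd, h1, h2, _, hE⟩, rfl⟩
      exact ⟨φ, ψ, φd, ψd, h1, h2, (hE s).symm⟩
  simp only [hmu]
  exact sInf_affine_lipschitz S (g * k) (by positivity)
    (fun q ⟨_, _, _, _, _, _, h, _⟩ => h) a b ha

end RT
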